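/- Let ψ₁,...,ψ₁₂ be the twelve vectors of (ℤ/2ℤ)⁴ listed in the context, and for integers d₁₁, d₁₂, d₂₁, d₂₂ with d₁₁·d₂₂ − 2·d₁₂·d₂₁ = 1 let M_d = [[d₂₂,−d₂₁,0,0],[−2d₁₂,d₁₁,0,0],[0,0,d₁₁,2d₁₂],[0,0,d₂₁,d₂₂]]. Then the permutation of {ψ₁,...,ψ₁₂} induced by multiplication by the reduction of E(M_d) modulo 2 is: (i) if d₂₁ is odd and d₁₂ is even, the permutation (ψ₃ ψ₉)(ψ₄ ψ₁₀)(ψ₅ ψ₁₁)(ψ₆ ψ₁₂), fixing the remaining four vectors; (ii) if d₁₂ is odd and d₂₁ is even, the permutation (ψ₁ ψ₂)(ψ₄ ψ₆)(ψ₇ ψ₈)(ψ₁₀ ψ₁₂), fixing the remaining four vectors. -/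

import Mathlib

open Matrix

/-- The standard symplectic matrix `J = [[0, I₂], [−I₂, 0]]` over `ℚ`. -/
def Jmat : Matrix (Fin 4) (Fin 4) ℚ :=
  !![0, 0, 1, 0; 0, 0, 0, 1; -1, 0, 0, 0; 0, -1, 0, 0]

/-- A rational number is an integer. -/
def IsIntEntry (q : ℚ) : Prop := ∃ n : ℤ, q = n

/-- A rational number is an even integer (lies in `2ℤ`). -/
def IsEvenEntry (q : ℚ) : Prop := ∃ n : ℤ, q = 2 * n

/-- A rational number is a half-integer (`2·q ∈ ℤ`). -/
def IsHalfIntEntry (q : ℚ) : Prop := ∃ n : ℤ, 2 * q = n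

/-- Membership in the paramodular group `G_Δ` for `Δ = diag(1,2)`:
`Mᵀ·J·M = J`, together with the integrality pattern: all entries in `ℤ`,
except that `M₁₄, M₂₁, M₂₃, M₂₄, M₃₄ ∈ 2ℤ` and `2·M₄₂ ∈ ℤ`
(indices here are 0-based: `M 0 3, M 1 0, M 1 2, M 1 3, M 2 3, M 3 1`). -/
def IsParamodular (M : Matrix (Fin 4) (Fin 4) ℚ) : Prop :=
  Mᵀ * Jmat * M = Jmat ∧
  IsEvenEntry (M 0 3) ∧ IsEvenEntry (M 1 0) ∧ IsEvenEntry (M 1 2) ∧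
  IsEvenEntry (M 1 3) ∧ IsEvenEntry (M 2 3) ∧ IsHalfIntEntry (M 3 1) ∧
  ∀ i j : Fin 4,
    (i, j) ∉ ({(0, 3), (1, 0), (1, 2), (1, 3), (2, 3), (3, 1)} :
      Set (Fin 4 × Fin 4)) → IsIntEntry (M i j)

/-- The diagonal matrix `D = diag(1,1,1,2)` over `ℚ`. -/
def Dmat : Matrix (Fin 4) (Fin 4) ℚ :=
  !![1, 0, 0, 0; 0, 1, 0, 0; 0, 0, 1, 0; 0, 0, 0, 2]

/-- The conjugation `E(M) = D·M·D⁻¹`. -/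
noncomputable def Emat (M : Matrix (Fin 4) (Fin 4) ℚ) : Matrix (Fin 4) (Fin 4) ℚ :=
  Dmat * M * Dmat⁻¹

/-- Reduction modulo 2 of a rational matrix with integer entries
(entrywise, via the numerator). -/
def red2 (M : Matrix (Fin 4) (Fin 4) ℚ) : Matrix (Fin 4) (Fin 4) (ZMod 2) :=
  Matrix.of fun i j => ((M i j).num : ZMod 2)

/-- The twelve vectors ψ₁,…,ψ₁₂ of `(ℤ/2ℤ)⁴` (those with `(v₂,v₄) ≠ (0,0)`),
indexed by `Fin 12` (ψ_{k+1} = psi k). -/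
def psi : Fin 12 → (Fin 4 → ZMod 2) :=
  ![![0, 0, 0, 1], ![0, 0, 1, 1], ![0, 1, 0, 0], ![0, 1, 0, 1],
    ![0, 1, 1, 0], ![0, 1, 1, 1], ![1, 0, 0, 1], ![1, 0, 1, 1],
    ![1, 1, 0, 0], ![1, 1, 0, 1], ![1, 1, 1, 0], ![1, 1, 1, 1]]

/-- The matrix `M_d`. -/
def Md (d11 d12 d21 d22 : ℤ) : Matrix (Fin 4) (Fin 4) ℚ :=
  !![(d22 : ℚ), -(d21 : ℚ), 0, 0;
     -2 * (d12 : ℚ), (d11 : ℚ), 0, 0;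
     0, 0, (d11 : ℚ), 2 * (d12 : ℚ);
     0, 0, (d21 : ℚ), (d22 : ℚ)]

/-- The permutation (ψ₃ ψ₉)(ψ₄ ψ₁₀)(ψ₅ ψ₁₁)(ψ₆ ψ₁₂), in 0-based indices. -/
def permD1 : Equiv.Perm (Fin 12) :=
  Equiv.swap 2 8 * Equiv.swap 3 9 * Equiv.swap 4 10 * Equiv.swap 5 11

/-- The permutation (ψ₁ ψ₂)(ψ₄ ψ₆)(ψ₇ ψ₈)(ψ₁₀ ψ₁₂), in 0-based indices. -/
def permD2 : Equiv.Perm (Fin 12) :=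
  Equiv.swap 0 1 * Equiv.swap 3 5 * Equiv.swap 6 7 * Equiv.swap 9 11

theorem Dmat_inv_eq : Dmat⁻¹ = !![1, 0, 0, 0; 0, 1, 0, 0; 0, 0, 1, 0; 0, 0, 0, 1/2] := by
  apply Matrix.inv_eq_right_inv
  ext i j
  fin_cases i <;> fin_cases j <;> simp [Dmat, Matrix.mul_apply, Fin.sum_univ_four]

theorem Emat_Md (a b c d : ℤ) : Emat (Md a b c d) =
    (!![d, -c, 0, 0; -2*b, a, 0, 0; 0, 0, a, b; 0, 0, 2*c, d] :
      Matrix (Fin 4) (Fin 4) ℤ).map (fun z : ℤ => (z : ℚ)) := by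
  rw [Emat, Dmat_inv_eq]
  ext i j
  fin_cases i <;> fin_cases j <;>
    simp [Dmat, Md, Matrix.mul_apply, Fin.sum_univ_four] <;> ring

theorem red2_map (A : Matrix (Fin 4) (Fin 4) ℤ) :
    red2 (A.map (fun z : ℤ => (z : ℚ))) = A.map (fun z : ℤ => (z : ZMod 2)) := by
  ext i j
  simp [red2]

theorem red2_Emat_Md (a b c d : ℤ) (h : a * d - 2 * b * c = 1) :
    red2 (Emat (Md a b c d)) =
    !![1, (c : ZMod 2), 0, 0; 0, 1, 0, 0; 0, 0, 1, (b : ZMod 2); 0, 0, 0, 1] := by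
  have h2 : (2 : ZMod 2) = 0 := rfl
  have had : (a : ZMod 2) * d = 1 := by
    have := congrArg (fun z : ℤ => (z : ZMod 2)) h
    simpa [h2] using this
  have key : ∀ x y : ZMod 2, x * y = 1 → x = 1 ∧ y = 1 := by decide
  obtain ⟨ha, hd⟩ := key _ _ had
  rw [Emat_Md, red2_map]
  ext i j
  fin_cases i <;> fin_cases j <;> simp [ha, hd, h2]

/-- The permutation of {ψ₁,…,ψ₁₂} induced by `E(M_d) mod 2` in the two parity
cases of `(d₂₁, d₁₂)`. -/
theorem Md_monodromy_permutation (d11 d12 d21 d22 : ℤ)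
    (h : d11 * d22 - 2 * d12 * d21 = 1) :
    (Odd d21 → Even d12 → ∀ k : Fin 12,
      (red2 (Emat (Md d11 d12 d21 d22))).mulVec (psi k) = psi (permD1 k)) ∧
    (Odd d12 → Even d21 → ∀ k : Fin 12,
      (red2 (Emat (Md d11 d12 d21 d22))).mulVec (psi k) = psi (permD2 k)) := by
  constructor
  · intro hc hb
    have hc' : (d21 : ZMod 2) = 1 := ZMod.intCast_eq_one_iff_odd.2 hc
    have hb' : (d12 : ZMod 2) = 0 := ZMod.intCast_eq_zero_iff_even.2 hb
    rw [red2_Emat_Md _ _ _ _ h, hc', hb']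
    decide
  · intro hb hc
    have hb' : (d12 : ZMod 2) = 1 := ZMod.intCast_eq_one_iff_odd.2 hb
    have hc' : (d21 : ZMod 2) = 0 := ZMod.intCast_eq_zero_iff_even.2 hc
    rw [red2_Emat_Md _ _ _ _ h, hc', hb']
    decide
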